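/- Let T : V → V be ℝ-linear with T∘J = −J∘T, Tᵗ = T, and 1 − T² positive definite, and let f_T(u) := exp(¼⟨u,Tu⟩). With the boson field (φ(v)F)(u) := −√2·i·(½⟨u,v⟩·F(u) − (DF)(u)(v)), for all u, v ∈ V: φ(v)f_T(u) = −(i/√2)·(⟨u,v⟩ − ⟨u,Tv⟩)·f_T(u), and consequently ½(φ(Tv) − i·φ(J(Tv)) + φ(v) + i·φ(Jv)) applied to f_T vanishes identically on V (i.e., the Gaussian f_T lies in the out-vacuum sector: a_J†(Tv)f_T + a_J(v)f_T = 0). -/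

import Mathlib

/-!
Antilinearity and symmetry of `T` make `(u, w) ↦ ⟨u, T w⟩` a symmetric real-bilinear form, so the
derivative of `f_T` at `u` is `w ↦ ½⟨u, T w⟩ f_T(u)`. This derivative is antilinear in `w`, that is,
`f_T` is antiholomorphic for `J`. Besides multiplication by `-(i/√2)⟨u, w⟩`, the creation operator
`a_J†(w)` contains only the holomorphic derivative, which kills `f_T`. The annihilation operator
`a_J(w)` is `i/√2` times the antiholomorphic derivative `D_w + i D_{Jw}`, which multiplies `f_T` by
`⟨u, T w⟩`. Hence `a_J†(T v) f_T` and `a_J(v) f_T` cancel.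
-/

open scoped RealInnerProductSpace

/-- The complex scalar product `⟨u,v⟩ := d(u,v) + i·d(Ju,v)` on `V` (antilinear in `u`)
associated to the complex structure `J`. -/
noncomputable def cInner {V : Type*} [NormedAddCommGroup V] [InnerProductSpace ℝ V]
    (J : Module.End ℝ V) (u v : V) : ℂ :=
  Complex.ofReal ⟪u, v⟫ + Complex.ofReal ⟪J u, v⟫ * Complex.I

/-- The boson field operator
`(φ(v)F)(u) := −√2·i·(½⟨u,v⟩·F(u) − (DF)(u)(v))`, where `(DF)(u)` is the real Fréchet
derivative of `F` at `u`. -/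
noncomputable def bosonField {V : Type*} [NormedAddCommGroup V] [InnerProductSpace ℝ V]
    (J : Module.End ℝ V) (v : V) (F : V → ℂ) : V → ℂ :=
  fun u => -(Real.sqrt 2 : ℂ) * Complex.I *
    ((2⁻¹ : ℂ) * cInner J u v * F u - fderiv ℝ F u v)

/-- A complex structure `J` on a real inner product space that preserves the inner product. -/
structure IsOrthogonalComplexStructure {V : Type*} [NormedAddCommGroup V] [InnerProductSpace ℝ V]
    (J : Module.End ℝ V) : Prop where
  mul_self : J * J = -1
  inner_map_map : ∀ u v : V, ⟪J u, J v⟫ = ⟪u, v⟫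

/-- The creation operator `a_J†(w) = ½(φ(w) - iφ(Jw))`. -/
noncomputable def bosonCreation {V : Type*} [NormedAddCommGroup V] [InnerProductSpace ℝ V]
    (J : Module.End ℝ V) (w : V) (F : V → ℂ) : V → ℂ :=
  fun u => 2⁻¹ * (bosonField J w F u - Complex.I * bosonField J (J w) F u)

/-- The annihilation operator `a_J(w) = ½(φ(w) + iφ(Jw))`. -/
noncomputable def bosonAnnihilation {V : Type*} [NormedAddCommGroup V] [InnerProductSpace ℝ V]
    (J : Module.End ℝ V) (w : V) (F : V → ℂ) : V → ℂ :=
  fun u => 2⁻¹ * (bosonField J w F u + Complex.I * bosonField J (J w) F u)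

/-- The Gaussian `f_T(u) = exp(¼⟨u, Tu⟩)`. -/
noncomputable def gaussianFun {V : Type*} [NormedAddCommGroup V] [InnerProductSpace ℝ V]
    (J T : Module.End ℝ V) : V → ℂ :=
  fun u => Complex.exp (4⁻¹ * cInner J u (T u))

section

variable {V : Type*} [NormedAddCommGroup V] [InnerProductSpace ℝ V] {J T : Module.End ℝ V}

theorem isBoundedBilinearMap_cInner (hJ : Continuous J) :
    IsBoundedBilinearMap ℝ fun p : V × V => cInner J p.1 p.2 := by
  let B : V →L[ℝ] V →L[ℝ] ℂ :=
    .compL ℝ V ℝ ℂ Complex.ofRealCLM ∘L innerSL ℝ +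
      .compL ℝ V ℝ ℂ (Complex.ofRealCLM.smulRight Complex.I) ∘L innerSL ℝ ∘L ⟨J, hJ⟩
  exact B.isBoundedBilinearMap

theorem cInner_neg_right (J : Module.End ℝ V) (u v : V) : cInner J u (-v) = -cInner J u v := by
  simp only [cInner, inner_neg_right, Complex.ofReal_neg]
  ring

theorem bosonField_eq_fderiv (J : Module.End ℝ V) (v : V) (F : V → ℂ) (u : V) :
    bosonField J v F u =
      -(Complex.I / (Real.sqrt 2 : ℂ)) * (cInner J u v * F u - 2 * fderiv ℝ F u v) := by
  have sqrt_two : (Real.sqrt 2 : ℂ) = 2 / (Real.sqrt 2 : ℂ) := by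
    exact_mod_cast (Real.div_sqrt (x := 2)).symm
  rw [bosonField]
  linear_combination
    -Complex.I * (2⁻¹ * cInner J u v * F u - fderiv ℝ F u v) * sqrt_two

theorem fderiv_gaussianFun (hJ : Continuous J) (hT : Continuous T) (u v : V) :
    fderiv ℝ (gaussianFun J T) u v =
      4⁻¹ * (cInner J u (T v) + cInner J v (T u)) * gaussianFun J T u := by
  let Tcl : V →L[ℝ] V := ⟨T, hT⟩
  have hpair : HasFDerivAt (fun w => (w, T w)) ((ContinuousLinearMap.id ℝ V).prod Tcl) u :=
    (hasFDerivAt_id u).prodMk Tcl.hasFDerivAt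
  have hform := ((isBoundedBilinearMap_cInner hJ).hasFDerivAt (u, T u)).comp u hpair
  have hexp : HasFDerivAt (gaussianFun J T) _ u := (hform.const_mul (4⁻¹ : ℂ)).cexp
  rw [hexp.fderiv]
  simp only [gaussianFun, Tcl, Function.comp_apply, smul_apply, smul_eq_mul,
    ContinuousLinearMap.comp_apply, ContinuousLinearMap.prod_apply, ContinuousLinearMap.id_apply,
    ContinuousLinearMap.coe_mk', IsBoundedBilinearMap.deriv_apply]
  ring

namespace IsOrthogonalComplexStructure

theorem inner_map_right (hJ : IsOrthogonalComplexStructure J) (u v : V) :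
    ⟪u, J v⟫ = -⟪J u, v⟫ := by
  have hJJ : J (J v) = -v := by simpa using LinearMap.congr_fun hJ.mul_self v
  rw [← hJ.inner_map_map u (J v), hJJ, inner_neg_right]

theorem continuous (hJ : IsOrthogonalComplexStructure J) : Continuous J :=
  (J.isometryOfInner hJ.inner_map_map).continuous

theorem cInner_map_right (hJ : IsOrthogonalComplexStructure J) (u v : V) :
    cInner J u (J v) = Complex.I * cInner J u v := by
  simp only [cInner, hJ.inner_map_right u v, hJ.inner_map_map, Complex.ofReal_neg]
  linear_combination -(⟪J u, v⟫ : ℂ) * Complex.I_mul_I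

theorem cInner_antilinear_map_right (hJ : IsOrthogonalComplexStructure J)
    (hTJ : T * J = -(J * T)) (u v : V) :
    cInner J u (T (J v)) = -(Complex.I * cInner J u (T v)) := by
  have hTJv : T (J v) = -J (T v) := LinearMap.congr_fun hTJ v
  rw [hTJv, cInner_neg_right, hJ.cInner_map_right]

theorem cInner_antilinear_comm (hJ : IsOrthogonalComplexStructure J)
    (hTJ : T * J = -(J * T)) (hT : T.IsSymmetric) (u v : V) :
    cInner J v (T u) = cInner J u (T v) := by
  have hTJv : T (J v) = -J (T v) := LinearMap.congr_fun hTJ v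
  have hre : ⟪v, T u⟫ = ⟪u, T v⟫ := by rw [← hT, real_inner_comm]
  have him : ⟪J v, T u⟫ = ⟪J u, T v⟫ := by
    rw [← hT, hTJv, inner_neg_left, real_inner_comm, hJ.inner_map_right, neg_neg]
  rw [cInner, cInner, hre, him]

theorem bosonCreation_eq_fderiv (hJ : IsOrthogonalComplexStructure J) (w : V) (F : V → ℂ) (u : V) :
    bosonCreation J w F u = -(Complex.I / (Real.sqrt 2 : ℂ)) *
      (cInner J u w * F u - (fderiv ℝ F u w - Complex.I * fderiv ℝ F u (J w))) := by
  simp only [bosonCreation, bosonField_eq_fderiv, hJ.cInner_map_right]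
  linear_combination
    Complex.I / (Real.sqrt 2 : ℂ) * 2⁻¹ * cInner J u w * F u * Complex.I_mul_I

theorem bosonAnnihilation_eq_fderiv (hJ : IsOrthogonalComplexStructure J) (w : V) (F : V → ℂ)
    (u : V) :
    bosonAnnihilation J w F u = Complex.I / (Real.sqrt 2 : ℂ) *
      (fderiv ℝ F u w + Complex.I * fderiv ℝ F u (J w)) := by
  simp only [bosonAnnihilation, bosonField_eq_fderiv, hJ.cInner_map_right]
  linear_combination
    -(Complex.I / (Real.sqrt 2 : ℂ)) * 2⁻¹ * cInner J u w * F u * Complex.I_mul_I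

section Gaussian

variable (hJ : IsOrthogonalComplexStructure J) (hTJ : T * J = -(J * T)) (hT : T.IsSymmetric)
  (hTc : Continuous T)

include hJ hTJ hT hTc

theorem fderiv_gaussianFun_of_isSymmetric (u v : V) :
    fderiv ℝ (gaussianFun J T) u v = 2⁻¹ * cInner J u (T v) * gaussianFun J T u := by
  rw [fderiv_gaussianFun hJ.continuous hTc, hJ.cInner_antilinear_comm hTJ hT u v]
  ring

theorem bosonField_gaussianFun (u v : V) :
    bosonField J v (gaussianFun J T) u =
      -(Complex.I / (Real.sqrt 2 : ℂ)) * (cInner J u v - cInner J u (T v)) *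
        gaussianFun J T u := by
  rw [bosonField_eq_fderiv, hJ.fderiv_gaussianFun_of_isSymmetric hTJ hT hTc]
  ring

theorem fderiv_gaussianFun_map_right (u v : V) :
    fderiv ℝ (gaussianFun J T) u (J v) = -(Complex.I * fderiv ℝ (gaussianFun J T) u v) := by
  simp only [hJ.fderiv_gaussianFun_of_isSymmetric hTJ hT hTc, hJ.cInner_antilinear_map_right hTJ]
  ring

theorem bosonCreation_gaussianFun (u w : V) :
    bosonCreation J w (gaussianFun J T) u =
      -(Complex.I / (Real.sqrt 2 : ℂ)) * cInner J u w * gaussianFun J T u := by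
  rw [hJ.bosonCreation_eq_fderiv, hJ.fderiv_gaussianFun_map_right hTJ hT hTc]
  linear_combination Complex.I / (Real.sqrt 2 : ℂ) * fderiv ℝ (gaussianFun J T) u w *
    Complex.I_mul_I

theorem bosonAnnihilation_gaussianFun (u w : V) :
    bosonAnnihilation J w (gaussianFun J T) u =
      Complex.I / (Real.sqrt 2 : ℂ) * cInner J u (T w) * gaussianFun J T u := by
  rw [hJ.bosonAnnihilation_eq_fderiv, hJ.fderiv_gaussianFun_map_right hTJ hT hTc,
    hJ.fderiv_gaussianFun_of_isSymmetric hTJ hT hTc]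
  linear_combination -(Complex.I / (Real.sqrt 2 : ℂ)) * 2⁻¹ * cInner J u (T w) *
    gaussianFun J T u * Complex.I_mul_I

theorem bosonCreation_add_bosonAnnihilation_gaussianFun (u v : V) :
    bosonCreation J (T v) (gaussianFun J T) u + bosonAnnihilation J v (gaussianFun J T) u = 0 := by
  rw [hJ.bosonCreation_gaussianFun hTJ hT hTc, hJ.bosonAnnihilation_gaussianFun hTJ hT hTc]
  ring

end Gaussian

end IsOrthogonalComplexStructure

end

theorem stmt_19_general {V : Type*} [NormedAddCommGroup V] [InnerProductSpace ℝ V]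
    (J : Module.End ℝ V) (hJ2 : J * J = -1)
    (hJd : ∀ u v : V, ⟪J u, J v⟫ = ⟪u, v⟫)
    (T : Module.End ℝ V)
    (hTJ : T * J = -(J * T)) (hTsym : T.IsSymmetric) (hTcont : Continuous T)
    (fT : V → ℂ) (hfT : fT = fun u => Complex.exp ((4⁻¹ : ℂ) * cInner J u (T u))) :
    (∀ u v : V, bosonField J v fT u =
      -(Complex.I / (Real.sqrt 2 : ℂ)) * (cInner J u v - cInner J u (T v)) * fT u) ∧
    (∀ u v : V, (2⁻¹ : ℂ) *
      (bosonField J (T v) fT u - Complex.I * bosonField J (J (T v)) fT u +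
        bosonField J v fT u + Complex.I * bosonField J (J v) fT u) = 0) := by
  have hJ : IsOrthogonalComplexStructure J := ⟨hJ2, hJd⟩
  obtain rfl : fT = gaussianFun J T := hfT
  refine ⟨hJ.bosonField_gaussianFun hTJ hTsym hTcont, fun u v => ?_⟩
  rw [← hJ.bosonCreation_add_bosonAnnihilation_gaussianFun hTJ hTsym hTcont u v, bosonCreation,
    bosonAnnihilation]
  ring

/-- Let `T : V → V` be ℝ-linear with `T∘J = −J∘T`, `Tᵗ = T`, and
`1 − T²` positive definite, and let `f_T(u) := exp(¼⟨u,Tu⟩)`.  Then for all `u, v ∈ V`: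
`φ(v)f_T(u) = −(i/√2)·(⟨u,v⟩ − ⟨u,Tv⟩)·f_T(u)`, and consequently
`½(φ(Tv) − i·φ(J(Tv)) + φ(v) + i·φ(Jv))` applied to `f_T` vanishes identically on `V`
(i.e. `a_J†(Tv)f_T + a_J(v)f_T = 0`: the Gaussian `f_T` lies in the out-vacuum sector). -/
theorem stmt_19 {V : Type*} [NormedAddCommGroup V] [InnerProductSpace ℝ V]
    [FiniteDimensional ℝ V] (m : ℕ) (hdim : Module.finrank ℝ V = 2 * m)
    (J : Module.End ℝ V) (hJ2 : J * J = -1)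
    (hJd : ∀ u v : V, ⟪J u, J v⟫ = ⟪u, v⟫)
    (T : Module.End ℝ V)
    (hTJ : T * J = -(J * T)) (hTsym : LinearMap.adjoint T = T)
    (hTpos : ∀ v : V, v ≠ 0 → 0 < ⟪v, (1 - T * T) v⟫)
    (fT : V → ℂ) (hfT : fT = fun u => Complex.exp ((4⁻¹ : ℂ) * cInner J u (T u))) :
    (∀ u v : V, bosonField J v fT u =
      -(Complex.I / (Real.sqrt 2 : ℂ)) * (cInner J u v - cInner J u (T v)) * fT u) ∧
    (∀ u v : V, (2⁻¹ : ℂ) *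
      (bosonField J (T v) fT u - Complex.I * bosonField J (J (T v)) fT u +
        bosonField J v fT u + Complex.I * bosonField J (J v) fT u) = 0) :=
  stmt_19_general J hJ2 hJd T hTJ (T.isSymmetric_iff_isSelfAdjoint.2 hTsym)
    T.continuous_of_finiteDimensional fT hfT
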